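/- Ground states of the octagon-square lattice on the torus: for all integers M, L ≥ 2, the hard-core fermion model on the torus octagon-square lattice O_{M,L} has exactly 2^M + 2^L − 1 zero-energy ground states, i.e. dim ker H = 2^M + 2^L − 1; moreover every state in ker H is an eigenvector of the number operator F (F|I⟩ = |I|·|I⟩) with eigenvalue M·L, i.e. all ground states reside at filling 1/4 of the 4ML sites. -/

import Mathlib

/-! ### The supersymmetric hard-core fermion model on a graph

For a finite simple graph `G` with totally ordered vertex set, the Hilbert space has an
orthonormal basis `{|I⟩ : I an independent set of G}`, the supercharge acts by
`Q|I⟩ = Σ_v ε(v,I) |I ∪ {v}⟩` (sum over `v ∉ I` with `I ∪ {v}` independent,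
`ε(v,I) = (−1)^{#{w ∈ I : w < v}}`), and the Hamiltonian is `H = Q Q† + Q† Q`. -/

open scoped BigOperators

/-- A finite set of vertices is independent if it contains no edge of `G`. -/
def Indep {V : Type*} (G : SimpleGraph V) (I : Finset V) : Prop :=
  ∀ ⦃a⦄, a ∈ I → ∀ ⦃b⦄, b ∈ I → ¬ G.Adj a b

lemma Indep.mono {V : Type*} {G : SimpleGraph V} {I J : Finset V}
    (hI : Indep G I) (hJI : J ⊆ I) : Indep G J :=
  fun _ ha _ hb => hI (hJI ha) (hJI hb)

/-- The independent sets of `G`, indexing the orthonormal basis of the Hilbert space. -/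
def IndepSet {V : Type*} (G : SimpleGraph V) : Type _ := {I : Finset V // Indep G I}

noncomputable instance {V : Type*} [Fintype V] [LinearOrder V] (G : SimpleGraph V) :
    Fintype (IndepSet G) := by
  classical exact Subtype.fintype _

instance {V : Type*} [LinearOrder V] (G : SimpleGraph V) : DecidableEq (IndepSet G) := by
  unfold IndepSet; infer_instance

/-- The Hilbert space `ℋ_G` of the hard-core fermion model: one orthonormal basis state
`|I⟩` for every independent set `I` of `G`. -/
noncomputable abbrev FockSpace {V : Type*} [Fintype V] [LinearOrder V] (G : SimpleGraph V) :=
  EuclideanSpace ℂ (IndepSet G)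

/-- The fermionic sign `ε(v, I) = (−1)^{#{w ∈ I : w < v}}`. -/
def fsign {V : Type*} [LinearOrder V] (I : Finset V) (v : V) : ℂ :=
  (-1) ^ (I.filter (· < v)).card

/-- The supercharge `Q`, with `Q|I⟩ = Σ_v ε(v,I) |I ∪ {v}⟩` over vertices `v ∉ I` such that
`I ∪ {v}` is independent; equivalently `(Qψ)(J) = Σ_{v ∈ J} ε(v, J∖{v}) ψ(J∖{v})`. -/
noncomputable def supercharge {V : Type*} [Fintype V] [LinearOrder V] (G : SimpleGraph V) :
    FockSpace G →ₗ[ℂ] FockSpace G where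
  toFun ψ := WithLp.toLp 2 fun J => ∑ v ∈ J.1, fsign (J.1.erase v) v *
      ψ ⟨J.1.erase v, J.2.mono (Finset.erase_subset v J.1)⟩
  map_add' ψ φ := by
    ext J
    change ∑ v ∈ J.1, fsign (J.1.erase v) v *
      (ψ ⟨J.1.erase v, J.2.mono (Finset.erase_subset v J.1)⟩ +
        φ ⟨J.1.erase v, J.2.mono (Finset.erase_subset v J.1)⟩) = _
    simp [mul_add, Finset.sum_add_distrib]
  map_smul' c ψ := by
    ext J
    change ∑ v ∈ J.1, fsign (J.1.erase v) v *
      (c * ψ ⟨J.1.erase v, J.2.mono (Finset.erase_subset v J.1)⟩) = _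
    simp [Finset.mul_sum, mul_left_comm]

/-- The Hamiltonian `H = Q Q† + Q† Q` of the supersymmetric hard-core fermion model. -/
noncomputable def hamiltonian {V : Type*} [Fintype V] [LinearOrder V] (G : SimpleGraph V) :
    FockSpace G →ₗ[ℂ] FockSpace G :=
  supercharge G ∘ₗ LinearMap.adjoint (supercharge G)
    + LinearMap.adjoint (supercharge G) ∘ₗ supercharge G

/-- The fermion-number operator `F`, with `F|I⟩ = |I| · |I⟩`. -/
noncomputable def numberOp {V : Type*} [Fintype V] [LinearOrder V] (G : SimpleGraph V) :
    FockSpace G →ₗ[ℂ] FockSpace G where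
  toFun ψ := WithLp.toLp 2 fun I => (I.1.card : ℂ) * ψ I
  map_add' ψ φ := by ext I; simp [mul_add]
  map_smul' c ψ := by ext I; simp [mul_left_comm]

/-- The bosonic subspace: the span of the basis states `|I⟩` with `|I|` even. -/
noncomputable def bosonic {V : Type*} [Fintype V] [LinearOrder V] (G : SimpleGraph V) :
    Submodule ℂ (FockSpace G) :=
  Submodule.span ℂ
    {e : FockSpace G | ∃ I : IndepSet G, Even I.1.card ∧ e = EuclideanSpace.single I 1}

/-- The fermionic subspace: the span of the basis states `|I⟩` with `|I|` odd. -/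
noncomputable def fermionic {V : Type*} [Fintype V] [LinearOrder V] (G : SimpleGraph V) :
    Submodule ℂ (FockSpace G) :=
  Submodule.span ℂ
    {e : FockSpace G | ∃ I : IndepSet G, Odd I.1.card ∧ e = EuclideanSpace.single I 1}

/-! ### The octagon-square (4-8) lattice on the torus -/

/-- Directed edge relation of the torus octagon-square lattice with `M × L` square
plaquettes: square-plaquette edges `(i,j,0)-(i,j,1)`, `(i,j,1)-(i,j,2)`, `(i,j,2)-(i,j,3)`,
`(i,j,3)-(i,j,0)`, and linking edges `(i,j,1)-(i+1,j,3)`, `(i,j,2)-(i,j+1,0)`, with both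
coordinates periodic. -/
def octTorusE (M L : ℕ) [NeZero M] [NeZero L] (a b : Fin M × Fin L × Fin 4) : Prop :=
  (a.1 = b.1 ∧ a.2.1 = b.2.1 ∧
    ((a.2.2 = 0 ∧ b.2.2 = 1) ∨ (a.2.2 = 1 ∧ b.2.2 = 2) ∨
     (a.2.2 = 2 ∧ b.2.2 = 3) ∨ (a.2.2 = 3 ∧ b.2.2 = 0))) ∨
  (b.1 = a.1 + 1 ∧ a.2.1 = b.2.1 ∧ a.2.2 = 1 ∧ b.2.2 = 3) ∨
  (a.1 = b.1 ∧ b.2.1 = a.2.1 + 1 ∧ a.2.2 = 2 ∧ b.2.2 = 0)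

/-- The torus octagon-square lattice `O_{M,L}`. -/
def octTorus (M L : ℕ) [NeZero M] [NeZero L] :
    SimpleGraph (Fin M × Fin L × Fin 4) where
  Adj a b := a ≠ b ∧ (octTorusE M L a b ∨ octTorusE M L b a)
  symm := by
    constructor
    rintro a b ⟨hne, h⟩
    exact ⟨hne.symm, by tauto⟩
  loopless := ⟨fun a h => h.1 rfl⟩

/-!
Since `Q² = 0`, Hodge theory identifies `ker H` with the cohomology of `Q`, and the cohomology can
be computed by Gaussian elimination: fixing a site `x` and a set `Δ` of configurations, match each
configuration of `Δ` containing `x` with the one lacking it, whenever both are in `Δ`, and pass to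
the unmatched rest of `Δ`. Carrying this out for finitely many sites in succession pairs off basis
states along an invertible block of `Q`. If all survivors have the same particle number `n`, no
cancellation between them is possible: there is one ground state per survivor, all at `F = n`.

On the octagon-square torus, match at the sites `1` of all plaquettes, then at the sites `3`, then
at the sites `0`. In a survivor, every plaquette carries a single particle; the sites used are
either `0` or `3`, depending only on the row, or `2` or `0`, depending only on the column. These
`2^L` and `2^M` configurations have `ML` particles each, and the two families share only the
configuration with all particles at the sites `0`.
-/

section Hodge

variable {𝕜 E : Type*} [RCLike 𝕜] [NormedAddCommGroup E] [InnerProductSpace 𝕜 E]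
  [FiniteDimensional 𝕜 E]

lemma ker_comp_adjoint_add_adjoint_comp (T : E →ₗ[𝕜] E) :
    (T ∘ₗ T.adjoint + T.adjoint ∘ₗ T).ker = T.rangeᗮ ⊓ T.ker := by
  ext ψ
  rw [Submodule.mem_inf, LinearMap.orthogonal_range, LinearMap.mem_ker, LinearMap.mem_ker,
    LinearMap.mem_ker]
  constructor
  · intro h
    have energy : ‖T.adjoint ψ‖ ^ 2 + ‖T ψ‖ ^ 2 = 0 := by
      have h0 : RCLike.re (inner 𝕜 ((T ∘ₗ T.adjoint + T.adjoint ∘ₗ T) ψ) ψ) = 0 := by simp [h]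
      rwa [LinearMap.add_apply, LinearMap.comp_apply, LinearMap.comp_apply, inner_add_left,
        LinearMap.adjoint_inner_left, ← LinearMap.adjoint_inner_right T, map_add,
        inner_self_eq_norm_sq, inner_self_eq_norm_sq] at h0
    have := (add_eq_zero_iff_of_nonneg (sq_nonneg _) (sq_nonneg _)).1 energy
    simpa using this
  · rintro ⟨h₁, h₂⟩
    simp [h₁, h₂]

lemma finrank_range_add_finrank_ker_comp_adjoint_add_adjoint_comp {T : E →ₗ[𝕜] E}
    (hT : T ∘ₗ T = 0) :
    Module.finrank 𝕜 T.range + Module.finrank 𝕜 (T ∘ₗ T.adjoint + T.adjoint ∘ₗ T).ker =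
      Module.finrank 𝕜 T.ker := by
  rw [ker_comp_adjoint_add_adjoint_comp]
  exact Submodule.finrank_add_inf_finrank_orthogonal (LinearMap.range_le_ker_iff.2 hT)

end Hodge

section Fermions

variable {V : Type*} [LinearOrder V]

lemma fsign_ne_zero (I : Finset V) (v : V) : fsign I v ≠ 0 :=
  pow_ne_zero _ (neg_ne_zero.2 one_ne_zero)

lemma fsign_erase_of_lt {I : Finset V} {v w : V} (hw : w ∈ I) (h : w < v) :
    fsign (I.erase w) v = -fsign I v := by
  have hmem : w ∈ I.filter (· < v) := Finset.mem_filter.2 ⟨hw, h⟩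
  rw [fsign, fsign, Finset.filter_erase, ← Finset.card_erase_add_one hmem, pow_succ, mul_neg_one,
    neg_neg]

lemma fsign_erase_of_le (I : Finset V) {v w : V} (h : v ≤ w) :
    fsign (I.erase w) v = fsign I v := by
  have hmem : w ∉ I.filter (· < v) := fun hw => h.not_gt (Finset.mem_filter.1 hw).2
  rw [fsign, fsign, Finset.filter_erase, Finset.erase_eq_of_notMem hmem]

lemma fsign_mul_fsign_erase_anticomm {J : Finset V} {v w : V} (hv : v ∈ J) (hw : w ∈ J)
    (h : v ≠ w) :
    fsign (J.erase v) v * fsign ((J.erase v).erase w) w =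
      -(fsign (J.erase w) w * fsign ((J.erase w).erase v) v) := by
  simp only [fsign_erase_of_le _ le_rfl]
  rcases h.lt_or_gt with h | h
  · rw [fsign_erase_of_lt hv h, fsign_erase_of_le _ h.le, mul_neg, mul_comm]
  · rw [fsign_erase_of_lt hw h, fsign_erase_of_le _ h.le, mul_neg, neg_neg, mul_comm]

end Fermions

namespace IndepSet

variable {V : Type*} {G : SimpleGraph V}

lemma coe_injective : Function.Injective fun I : IndepSet G => I.1 :=
  Subtype.val_injective

variable [LinearOrder V]

/-- The independent set `I ∖ {v}`; it is `I` itself when `v ∉ I`. -/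
def erase (I : IndepSet G) (v : V) : IndepSet G :=
  ⟨I.1.erase v, I.2.mono (Finset.erase_subset v I.1)⟩

@[simp]
lemma mem_erase {I : IndepSet G} {v w : V} : w ∈ (I.erase v).1 ↔ w ≠ v ∧ w ∈ I.1 :=
  Finset.mem_erase

lemma erase_right_comm (I : IndepSet G) (v w : V) :
    (I.erase v).erase w = (I.erase w).erase v :=
  Subtype.ext Finset.erase_right_comm

lemma eq_of_erase_eq_erase {I J : IndepSet G} {v : V} (hI : v ∈ I.1) (hJ : v ∈ J.1)
    (h : I.erase v = J.erase v) : I = J :=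
  Subtype.ext (Finset.erase_injOn' v hI hJ (congrArg Subtype.val h))

end IndepSet

section Supercharge

variable {V : Type*} [Fintype V] [LinearOrder V] {G : SimpleGraph V}

lemma supercharge_apply (ψ : FockSpace G) (J : IndepSet G) :
    supercharge G ψ J = ∑ v ∈ J.1, fsign (J.1.erase v) v * ψ (J.erase v) :=
  rfl

lemma supercharge_apply_congr {ψ φ : FockSpace G} {J : IndepSet G}
    (h : ∀ v ∈ J.1, ψ (J.erase v) = φ (J.erase v)) : supercharge G ψ J = supercharge G φ J := by
  rw [supercharge_apply, supercharge_apply]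
  exact Finset.sum_congr rfl fun v hv => by rw [h v hv]

lemma supercharge_supercharge (ψ : FockSpace G) : supercharge G (supercharge G ψ) = 0 := by
  ext J
  simp only [supercharge_apply, Finset.mul_sum, PiLp.zero_apply]
  rw [Finset.sum_sigma']
  refine Finset.sum_involution (fun p _ => ⟨p.2, p.1⟩) ?cancel ?fixedPointFree ?mem ?involutive
  case cancel =>
    rintro ⟨v, w⟩ h
    obtain ⟨hv, hwv, hw⟩ : v ∈ J.1 ∧ w ≠ v ∧ w ∈ J.1 := by simpa using h
    have anticomm : fsign (J.1.erase v) v * fsign ((J.erase v).1.erase w) w =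
        -(fsign (J.1.erase w) w * fsign ((J.erase w).1.erase v) v) :=
      fsign_mul_fsign_erase_anticomm hv hw hwv.symm
    dsimp only
    rw [J.erase_right_comm w v, ← mul_assoc, ← mul_assoc, anticomm]
    ring
  case fixedPointFree =>
    rintro ⟨v, w⟩ h - heq
    obtain ⟨-, hwv, -⟩ : v ∈ J.1 ∧ w ≠ v ∧ w ∈ J.1 := by simpa using h
    exact hwv (congrArg Sigma.fst heq)
  case mem =>
    rintro ⟨v, w⟩ h
    obtain ⟨hv, hwv, hw⟩ : v ∈ J.1 ∧ w ≠ v ∧ w ∈ J.1 := by simpa using h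
    simpa using ⟨hw, hwv.symm, hv⟩
  case involutive => exact fun _ _ => rfl

lemma mem_ker_hamiltonian {ψ : FockSpace G} :
    ψ ∈ (hamiltonian G).ker ↔ ψ ∈ (supercharge G).rangeᗮ ∧ supercharge G ψ = 0 := by
  rw [hamiltonian, ker_comp_adjoint_add_adjoint_comp, Submodule.mem_inf, LinearMap.mem_ker]

lemma finrank_range_supercharge_add_finrank_ker_hamiltonian :
    Module.finrank ℂ (supercharge G).range + Module.finrank ℂ (hamiltonian G).ker =
      Module.finrank ℂ (supercharge G).ker :=
  finrank_range_add_finrank_ker_comp_adjoint_add_adjoint_comp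
    (LinearMap.ext supercharge_supercharge)

lemma numberOp_apply (ψ : FockSpace G) (I : IndepSet G) :
    numberOp G ψ I = (I.1.card : ℂ) * ψ I :=
  rfl

lemma numberOp_supercharge (ψ : FockSpace G) :
    numberOp G (supercharge G ψ) = supercharge G (numberOp G ψ) + supercharge G ψ := by
  ext J
  simp only [PiLp.add_apply, numberOp_apply, supercharge_apply, Finset.mul_sum,
    ← Finset.sum_add_distrib]
  refine Finset.sum_congr rfl fun v hv => ?_
  have hcard : (J.1.card : ℂ) = (J.erase v).1.card + 1 :=
    mod_cast (Finset.card_erase_add_one hv).symm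
  rw [hcard]
  ring

lemma isSymmetric_numberOp : (numberOp G).IsSymmetric := fun ψ φ => by
  simp only [PiLp.inner_apply, numberOp_apply]
  refine Finset.sum_congr rfl fun I _ => ?_
  rw [RCLike.inner_apply, RCLike.inner_apply, map_mul, Complex.conj_natCast]
  ring

end Supercharge

/-! ### Gaussian elimination of a block of the supercharge -/

section GaussianElimination

variable {V : Type*} [Fintype V] [LinearOrder V] {G : SimpleGraph V}
  {U D : Set (IndepSet G)} {n : ℕ}

/-- The `D × U` block of the supercharge is square and invertible, for disjoint sets `U`, `D` of
basis states. Gaussian elimination of this block leaves the basis states outside `U ∪ D`. -/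
structure IsInvertibleBlock (U D : Set (IndepSet G)) : Prop where
  disjoint : Disjoint U D
  ncard_eq : U.ncard = D.ncard
  eq_zero : ∀ ψ : FockSpace G, (∀ I ∉ U, ψ I = 0) → (∀ J ∈ D, supercharge G ψ J = 0) → ψ = 0

/-- The restriction of a state to its amplitudes on a set of basis states. -/
noncomputable def amplitudesOn (S : Set (IndepSet G)) : FockSpace G →ₗ[ℂ] (S → ℂ) :=
  LinearMap.funLeft ℂ ℂ Subtype.val ∘ₗ (WithLp.linearEquiv 2 ℂ (IndepSet G → ℂ)).toLinearMap

lemma finrank_fun_coe_set {α : Type*} [Finite α] (S : Set α) :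
    Module.finrank ℂ (S → ℂ) = S.ncard := by
  have := Fintype.ofFinite S
  rw [Module.finrank_fintype_fun_eq_card, ← Nat.card_eq_fintype_card, Nat.card_coe_set_eq]

lemma finrank_fockSpace (U : Set (IndepSet G)) :
    Module.finrank ℂ (FockSpace G) = U.ncard + Uᶜ.ncard := by
  rw [finrank_euclideanSpace, ← Nat.card_eq_fintype_card, Set.ncard_add_ncard_compl]

namespace IsInvertibleBlock

lemma exists_eq_and_supercharge_eq (h : IsInvertibleBlock U D) (φ χ : FockSpace G) :
    ∃ ψ : FockSpace G, (∀ I ∉ U, ψ I = φ I) ∧ ∀ J ∈ D, supercharge G ψ J = χ J := by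
  let T : FockSpace G →ₗ[ℂ] (↥Uᶜ → ℂ) × (D → ℂ) :=
    (amplitudesOn Uᶜ).prod (amplitudesOn D ∘ₗ supercharge G)
  have injective : Function.Injective T := by
    refine (injective_iff_map_eq_zero T).2 fun ψ hψ => h.eq_zero ψ (fun I hI => ?_) fun J hJ => ?_
    · exact congrFun (congrArg Prod.fst hψ) ⟨I, hI⟩
    · exact congrFun (congrArg Prod.snd hψ) ⟨J, hJ⟩
  have finrank_eq : Module.finrank ℂ (FockSpace G) =
      Module.finrank ℂ ((↥Uᶜ → ℂ) × (D → ℂ)) := by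
    rw [Module.finrank_prod, finrank_fun_coe_set, finrank_fun_coe_set, finrank_fockSpace U,
      h.ncard_eq, add_comm]
  obtain ⟨ψ, hψ⟩ := (LinearMap.injective_iff_surjective_of_finrank_eq_finrank finrank_eq).1
    injective (amplitudesOn Uᶜ φ, amplitudesOn D χ)
  exact ⟨ψ, fun I hI => congrFun (congrArg Prod.fst hψ) ⟨I, hI⟩,
    fun J hJ => congrFun (congrArg Prod.snd hψ) ⟨J, hJ⟩⟩

lemma numberOp_eq_smul_of_supercharge_eq_zero (h : IsInvertibleBlock U D)
    (hn : ∀ I ∉ U ∪ D, I.1.card = n) {ψ : FockSpace G} (hQ : supercharge G ψ = 0)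
    (hD : ∀ J ∈ D, ψ J = 0) : numberOp G ψ = (n : ℂ) • ψ := by
  rw [← sub_eq_zero]
  refine h.eq_zero _ (fun I hU => ?_) fun J _ => ?_
  · rw [PiLp.sub_apply, PiLp.smul_apply, numberOp_apply, smul_eq_mul]
    by_cases hID : I ∈ D
    · simp [hD I hID]
    · simp [hn I (by simp [hU, hID])]
  · have : supercharge G (numberOp G ψ) = 0 := by
      simpa [hQ] using (numberOp_supercharge ψ).symm
    simp [this, hQ]

/-- The state `ψ` with these amplitudes and `Qψ = 0` on `D` need not be closed, but `Qψ` is, so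
`Qψ` has particle number `n` and `(F + 1 - n)ψ` is closed. -/
lemma exists_cocycle_of_eq_zero (h : IsInvertibleBlock U D) (hn : ∀ I ∉ U ∪ D, I.1.card = n)
    {φ : FockSpace G} (hφ : ∀ J ∈ D, φ J = 0) :
    ∃ ψ : FockSpace G, supercharge G ψ = 0 ∧ ∀ I ∉ U, ψ I = φ I := by
  obtain ⟨ψ, hψU, hψD⟩ := h.exists_eq_and_supercharge_eq φ 0
  have degree : numberOp G (supercharge G ψ) = (n : ℂ) • supercharge G ψ :=
    h.numberOp_eq_smul_of_supercharge_eq_zero hn (supercharge_supercharge ψ) hψD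
  refine ⟨numberOp G ψ + ψ - (n : ℂ) • ψ, ?_, fun I hU => ?_⟩
  · rw [map_sub, map_add, map_smul, ← numberOp_supercharge, degree, sub_self]
  · rw [PiLp.sub_apply, PiLp.add_apply, PiLp.smul_apply, numberOp_apply, smul_eq_mul, hψU I hU]
    by_cases hID : I ∈ D
    · simp [hφ I hID]
    · simp [hn I (by simp [hU, hID])]

lemma exists_cocycle (h : IsInvertibleBlock U D) (hn : ∀ I ∉ U ∪ D, I.1.card = n)
    (φ : FockSpace G) : ∃ ψ : FockSpace G, supercharge G ψ = 0 ∧ ∀ I ∉ U, ψ I = φ I := by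
  obtain ⟨y, -, hy⟩ := h.exists_eq_and_supercharge_eq 0 φ
  obtain ⟨χ, hχ, hχU⟩ := h.exists_cocycle_of_eq_zero hn (φ := φ - supercharge G y) fun J hJ => by
    rw [PiLp.sub_apply, hy J hJ, sub_self]
  refine ⟨supercharge G y + χ, ?_, fun I hU => ?_⟩
  · rw [map_add, supercharge_supercharge, hχ, add_zero]
  · rw [PiLp.add_apply, hχU I hU, PiLp.sub_apply, add_sub_cancel]

lemma ncard_le_finrank_range (h : IsInvertibleBlock U D) :
    D.ncard ≤ Module.finrank ℂ (supercharge G).range := by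
  rw [← finrank_fun_coe_set]
  refine LinearMap.finrank_le_finrank_of_surjective
    (f := amplitudesOn D ∘ₗ (supercharge G).range.subtype) fun d => ?_
  obtain ⟨φ, hφ⟩ := LinearMap.funLeft_surjective_of_injective ℂ ℂ _ Subtype.val_injective d
  obtain ⟨y, -, hy⟩ := h.exists_eq_and_supercharge_eq 0 (WithLp.toLp 2 φ)
  exact ⟨⟨supercharge G y, y, rfl⟩, hφ ▸ funext fun J => hy J J.2⟩

lemma ncard_compl_le_finrank_ker (h : IsInvertibleBlock U D) (hn : ∀ I ∉ U ∪ D, I.1.card = n) :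
    Uᶜ.ncard ≤ Module.finrank ℂ (supercharge G).ker := by
  rw [← finrank_fun_coe_set]
  refine LinearMap.finrank_le_finrank_of_surjective
    (f := amplitudesOn Uᶜ ∘ₗ (supercharge G).ker.subtype) fun c => ?_
  obtain ⟨φ, hφ⟩ := LinearMap.funLeft_surjective_of_injective ℂ ℂ _ Subtype.val_injective c
  obtain ⟨ψ, hψ, hψU⟩ := h.exists_cocycle hn (WithLp.toLp 2 φ)
  exact ⟨⟨ψ, hψ⟩, hφ ▸ funext fun I => hψU I I.2⟩

theorem finrank_ker_hamiltonian (h : IsInvertibleBlock U D) (hn : ∀ I ∉ U ∪ D, I.1.card = n) :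
    Module.finrank ℂ (hamiltonian G).ker = (U ∪ D)ᶜ.ncard := by
  have hodge := finrank_range_supercharge_add_finrank_ker_hamiltonian (G := G)
  have rank_nullity := (supercharge G).finrank_range_add_finrank_ker
  have total := finrank_fockSpace U
  have compl : (U ∪ D)ᶜ.ncard + D.ncard = Uᶜ.ncard := by
    rw [Set.compl_union, ← Set.sdiff_eq,
      Set.ncard_sdiff_add_ncard_of_subset h.disjoint.subset_compl_left]
  have := h.ncard_eq
  have := h.ncard_le_finrank_range
  have := h.ncard_compl_le_finrank_ker hn
  omega

lemma numberOp_sub_smul_mem_range (h : IsInvertibleBlock U D) (hn : ∀ I ∉ U ∪ D, I.1.card = n)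
    {ψ : FockSpace G} (hψ : supercharge G ψ = 0) :
    numberOp G ψ - (n : ℂ) • ψ ∈ (supercharge G).range := by
  obtain ⟨y, -, hy⟩ := h.exists_eq_and_supercharge_eq 0 ψ
  have degree : numberOp G (ψ - supercharge G y) = (n : ℂ) • (ψ - supercharge G y) := by
    refine h.numberOp_eq_smul_of_supercharge_eq_zero hn ?_ fun J hJ => ?_
    · rw [map_sub, hψ, supercharge_supercharge, sub_zero]
    · rw [PiLp.sub_apply, hy J hJ, sub_self]
  refine ⟨numberOp G y + y - (n : ℂ) • y, ?_⟩
  rw [map_sub, smul_sub] at degree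
  rw [map_sub, map_add, map_smul, ← numberOp_supercharge]
  rw [sub_eq_sub_iff_add_eq_add] at degree ⊢
  rw [degree, add_comm]

/-- With `N = F - n`, both `Nψ` and `N²ψ` are exact, and `ψ` is orthogonal to exact states, so
`‖Nψ‖² = ⟪ψ, N²ψ⟫ = 0`. -/
theorem numberOp_of_mem_ker_hamiltonian (h : IsInvertibleBlock U D)
    (hn : ∀ I ∉ U ∪ D, I.1.card = n) {ψ : FockSpace G} (hψ : ψ ∈ (hamiltonian G).ker) :
    numberOp G ψ = (n : ℂ) • ψ := by
  obtain ⟨orthogonal, hQ⟩ := mem_ker_hamiltonian.1 hψ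
  let N : FockSpace G →ₗ[ℂ] FockSpace G := numberOp G - (n : ℂ) • LinearMap.id
  have symmetric : N.IsSymmetric :=
    isSymmetric_numberOp.sub (LinearMap.IsSymmetric.id.smul (Complex.conj_natCast n))
  have hQN : supercharge G (N ψ) = 0 := by
    obtain ⟨y, hy⟩ := h.numberOp_sub_smul_mem_range hn hQ
    have hN : N ψ = supercharge G y := hy.symm
    rw [hN, supercharge_supercharge]
  have hNN : N (N ψ) ∈ (supercharge G).range := h.numberOp_sub_smul_mem_range hn hQN
  have hN : N ψ = 0 := by
    rw [← inner_self_eq_zero (𝕜 := ℂ), symmetric]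
    exact Submodule.inner_left_of_mem_orthogonal hNN orthogonal
  exact sub_eq_zero.1 hN

end IsInvertibleBlock

end GaussianElimination

/-! ### Matching configurations site by site -/

section ElementMatching

variable {V : Type*} [LinearOrder V] {G : SimpleGraph V} {Δ Γ : Set (IndepSet G)} {x : V}

/-- The configurations in `Δ` from which a particle at `x` can be removed without leaving `Δ`. -/
def upperCells (Δ : Set (IndepSet G)) (x : V) : Set (IndepSet G) :=
  {J ∈ Δ | x ∈ J.1 ∧ J.erase x ∈ Δ}

/-- The configurations in `Δ` to which a particle at `x` can be added without leaving `Δ`. -/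
def lowerCells (Δ : Set (IndepSet G)) (x : V) : Set (IndepSet G) :=
  (fun J => J.erase x) '' upperCells Δ x

/-- What remains of `Δ` once each configuration with a particle at `x` is matched with the one
obtained by removing that particle, whenever both are in `Δ`. -/
def eliminate (Δ : Set (IndepSet G)) (x : V) : Set (IndepSet G) :=
  Δ \ (lowerCells Δ x ∪ upperCells Δ x)

/-- `Γ` arises from `Δ` by matching at finitely many successive sites. -/
def EliminatesTo (Δ Γ : Set (IndepSet G)) : Prop :=
  Relation.ReflTransGen (fun Δ₁ Δ₂ => ∃ x, Δ₂ = eliminate Δ₁ x) Δ Γ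

lemma upperCells_subset : upperCells Δ x ⊆ Δ := fun _ hJ => hJ.1

lemma lowerCells_subset : lowerCells Δ x ⊆ Δ := by
  rintro _ ⟨J, hJ, rfl⟩
  exact hJ.2.2

lemma notMem_of_mem_lowerCells {I : IndepSet G} (hI : I ∈ lowerCells Δ x) : x ∉ I.1 := by
  obtain ⟨J, -, rfl⟩ := hI
  simp

lemma disjoint_lowerCells_upperCells : Disjoint (lowerCells Δ x) (upperCells Δ x) :=
  Set.disjoint_left.2 fun _ hl hu => notMem_of_mem_lowerCells hl hu.2.1

lemma ncard_lowerCells : (lowerCells Δ x).ncard = (upperCells Δ x).ncard :=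
  Set.InjOn.ncard_image fun _ hI _ hJ h => IndepSet.eq_of_erase_eq_erase hI.2.1 hJ.2.1 h

lemma EliminatesTo.refl (Δ : Set (IndepSet G)) : EliminatesTo Δ Δ :=
  Relation.ReflTransGen.refl

lemma EliminatesTo.subset (h : EliminatesTo Δ Γ) : Γ ⊆ Δ := by
  induction h with
  | refl => exact subset_rfl
  | tail _ hstep ih =>
    obtain ⟨x, rfl⟩ := hstep
    exact Set.sdiff_subset.trans ih

variable [Fintype V] {U D : Set (IndepSet G)}

namespace IsInvertibleBlock

lemma eq_zero_of_mem_of_eliminate (h : IsInvertibleBlock U D) (hUD : U ∪ D ⊆ eliminate Δ x)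
    {ψ : FockSpace G} (hψ : ∀ I ∉ lowerCells Δ x ∪ U, ψ I = 0)
    (hQ : ∀ J ∈ D, supercharge G ψ J = 0) {I : IndepSet G} (hI : x ∈ I.1) : ψ I = 0 := by
  -- `ψx` is supported on `U`, and `Qψx` vanishes on `D` because `Qψ` does.
  let ψx : FockSpace G := WithLp.toLp 2 fun I => if x ∈ I.1 then ψ I else 0
  have ψx_of_mem {I : IndepSet G} (hI : x ∈ I.1) : ψx I = ψ I := if_pos hI
  have ψx_of_notMem {I : IndepSet G} (hI : x ∉ I.1) : ψx I = 0 := if_neg hI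
  suffices ψx = 0 by rw [← ψx_of_mem hI, this, PiLp.zero_apply]
  refine h.eq_zero ψx (fun I hU => ?_) fun J hJ => ?_
  · by_cases hxI : x ∈ I.1
    · rw [ψx_of_mem hxI, hψ I fun hI => hI.elim (notMem_of_mem_lowerCells · hxI) hU]
    · exact ψx_of_notMem hxI
  · obtain ⟨hJΔ, hJ'⟩ := hUD (Or.inr hJ)
    by_cases hxJ : x ∈ J.1
    · have hJx : J.erase x ∉ Δ := fun hmem => hJ' (Or.inr ⟨hJΔ, hxJ, hmem⟩)
      rw [← hQ J hJ]
      refine supercharge_apply_congr fun v _ => ?_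
      by_cases hvx : v = x
      · subst hvx
        rw [ψx_of_notMem (by simp), hψ _ fun hmem => hJx ?_]
        exact hmem.elim (lowerCells_subset ·) fun hU => (hUD (Or.inl hU)).1
      · exact ψx_of_mem (IndepSet.mem_erase.2 ⟨Ne.symm hvx, hxJ⟩)
    · rw [supercharge_apply]
      exact Finset.sum_eq_zero fun v _ => by
        rw [ψx_of_notMem fun hmem => hxJ (IndepSet.mem_erase.1 hmem).2, mul_zero]

lemma union_eliminate (h : IsInvertibleBlock U D) (hUD : U ∪ D ⊆ eliminate Δ x) :
    IsInvertibleBlock (lowerCells Δ x ∪ U) (upperCells Δ x ∪ D) := by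
  have disj : Disjoint (lowerCells Δ x ∪ upperCells Δ x) (U ∪ D) :=
    (Set.disjoint_sdiff_left.mono_left hUD).symm
  obtain ⟨⟨hlU, huU⟩, hlD, huD⟩ := by
    simpa only [Set.disjoint_union_left, Set.disjoint_union_right] using disj
  refine ⟨?_, ?_, fun ψ hψ hQ => ?_⟩
  · simp only [Set.disjoint_union_left, Set.disjoint_union_right]
    exact ⟨⟨disjoint_lowerCells_upperCells, huU.symm⟩, hlD, h.disjoint⟩
  · rw [Set.ncard_union_eq hlU, Set.ncard_union_eq huD, ncard_lowerCells, h.ncard_eq]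
  · have hx {I : IndepSet G} (hI : x ∈ I.1) : ψ I = 0 :=
      h.eq_zero_of_mem_of_eliminate hUD hψ (fun J hJ => hQ J (Or.inr hJ)) hI
    have hlower : ∀ I ∈ lowerCells Δ x, ψ I = 0 := by
      rintro _ ⟨J, hJ, rfl⟩
      have single : supercharge G ψ J = fsign (J.1.erase x) x * ψ (J.erase x) := by
        rw [supercharge_apply]
        refine Finset.sum_eq_single_of_mem x hJ.2.1 fun v _ hv => ?_
        rw [hx (IndepSet.mem_erase.2 ⟨hv.symm, hJ.2.1⟩), mul_zero]
      exact (mul_eq_zero.1 (single ▸ hQ J (Or.inl hJ))).resolve_left (fsign_ne_zero _ _)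
    refine h.eq_zero ψ (fun I hI => ?_) fun J hJ => hQ J (Or.inr hJ)
    by_cases hIl : I ∈ lowerCells Δ x
    · exact hlower I hIl
    · exact hψ I fun hmem => hmem.elim hIl hI

lemma empty : IsInvertibleBlock (∅ : Set (IndepSet G)) ∅ :=
  ⟨disjoint_bot_left, rfl, fun _ hψ _ => PiLp.ext fun I => hψ I (Set.notMem_empty I)⟩

end IsInvertibleBlock

namespace EliminatesTo

lemma exists_isInvertibleBlock (h : EliminatesTo Δ Γ) :
    ∃ U D : Set (IndepSet G), IsInvertibleBlock U D ∧ U ∪ D = Δ \ Γ := by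
  induction h using Relation.ReflTransGen.head_induction_on with
  | refl => exact ⟨∅, ∅, .empty, by simp⟩
  | @head Δ Δ' hstep hΔ' ih =>
    obtain ⟨x, rfl⟩ := hstep
    obtain ⟨U, D, hblock, hUD⟩ := ih
    refine ⟨_, _, hblock.union_eliminate (hUD.trans_subset Set.sdiff_subset), ?_⟩
    have hcells : lowerCells Δ x ∪ upperCells Δ x ⊆ Δ \ Γ := fun I hI =>
      ⟨Set.union_subset lowerCells_subset upperCells_subset hI,
        fun hIΓ => (EliminatesTo.subset hΔ' hIΓ).2 hI⟩
    rw [Set.union_union_union_comm, hUD, eliminate, Set.sdiff_sdiff_comm,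
      Set.union_sdiff_cancel hcells]

theorem finrank_ker_hamiltonian {n : ℕ} (h : EliminatesTo Set.univ Γ)
    (hn : ∀ I ∈ Γ, I.1.card = n) : Module.finrank ℂ (hamiltonian G).ker = Γ.ncard := by
  obtain ⟨U, D, hblock, hUD⟩ := h.exists_isInvertibleBlock
  rw [← Set.compl_eq_univ_sdiff] at hUD
  rw [hblock.finrank_ker_hamiltonian (n := n) (by simpa [hUD] using hn), hUD, compl_compl]

theorem numberOp_of_mem_ker_hamiltonian {n : ℕ} (h : EliminatesTo Set.univ Γ)
    (hn : ∀ I ∈ Γ, I.1.card = n) {ψ : FockSpace G} (hψ : ψ ∈ (hamiltonian G).ker) :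
    numberOp G ψ = (n : ℂ) • ψ := by
  obtain ⟨U, D, hblock, hUD⟩ := h.exists_isInvertibleBlock
  rw [← Set.compl_eq_univ_sdiff] at hUD
  exact hblock.numberOp_of_mem_ker_hamiltonian (by simpa [hUD] using hn) hψ

end EliminatesTo

end ElementMatching

section SimultaneousMatching

variable {V : Type*} [LinearOrder V] {G : SimpleGraph V} {Δ : Set (IndepSet G)}

lemma IndepSet.exists_erase_eq {I : IndepSet G} {x : V} (hx : x ∉ I.1)
    (hfree : ∀ v ∈ I.1, ¬ G.Adj x v) : ∃ J : IndepSet G, x ∈ J.1 ∧ J.erase x = I := by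
  refine ⟨⟨insert x I.1, fun a ha b hb hab => ?_⟩, Finset.mem_insert_self _ _,
    Subtype.ext (Finset.erase_insert hx)⟩
  rcases Finset.mem_insert.1 ha with rfl | haI
  · rcases Finset.mem_insert.1 hb with rfl | hbI
    · exact G.irrefl hab
    · exact hfree b hbI hab
  · rcases Finset.mem_insert.1 hb with rfl | hbI
    · exact hfree a haI hab.symm
    · exact I.2 haI hbI hab

lemma eliminate_eq_setOf_not {x : V} {B : IndepSet G → Prop}
    (hB : ∀ J, x ∈ J.1 → (B (J.erase x) ↔ B J))
    (hremove : ∀ J ∈ Δ, x ∈ J.1 → (J.erase x ∈ Δ ↔ B J))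
    (hadd : ∀ I ∈ Δ, x ∉ I.1 → B I → ∃ J ∈ Δ, x ∈ J.1 ∧ J.erase x = I) :
    eliminate Δ x = {I ∈ Δ | ¬ B I} := by
  ext I
  refine and_congr_right fun hI => not_congr ⟨?_, fun hBI => ?_⟩
  · rintro (⟨J, ⟨hJ, hx, hJx⟩, rfl⟩ | ⟨hJ, hx, hJx⟩)
    · exact (hB J hx).2 ((hremove J hJ hx).1 hJx)
    · exact (hremove I hJ hx).1 hJx
  · by_cases hx : x ∈ I.1
    · exact Or.inr ⟨hI, hx, (hremove I hI hx).2 hBI⟩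
    · obtain ⟨J, hJ, hxJ, rfl⟩ := hadd I hI hx hBI
      exact Or.inl ⟨J, ⟨hJ, hxJ, hI⟩, rfl⟩

/-- Read `B p I` as: the occupation of `x p` can be toggled in `I` without leaving `Δ`. As `B q` is
insensitive to toggling `x p`, the matchings at the various sites do not interfere. -/
theorem eliminatesTo_setOf_forall_not {ι : Type*} [Finite ι] {x : ι → V}
    {B : ι → IndepSet G → Prop}
    (hB : ∀ p q J, x p ∈ J.1 → (B q (J.erase (x p)) ↔ B q J))
    (hremove : ∀ p, ∀ J ∈ Δ, x p ∈ J.1 → (J.erase (x p) ∈ Δ ↔ B p J))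
    (hadd : ∀ p, ∀ I ∈ Δ, x p ∉ I.1 → B p I → ∃ J ∈ Δ, x p ∈ J.1 ∧ J.erase (x p) = I) :
    EliminatesTo Δ {I ∈ Δ | ∀ p, ¬ B p I} := by
  classical
  have := Fintype.ofFinite ι
  suffices ∀ s : Finset ι, EliminatesTo Δ {I ∈ Δ | ∀ p ∈ s, ¬ B p I} by
    simpa using this Finset.univ
  intro s
  induction s using Finset.induction_on with
  | empty => simpa using EliminatesTo.refl Δ
  | insert q s _ ih =>
    refine ih.tail ⟨x q, ?_⟩
    rw [eliminate_eq_setOf_not (B := B q) (hB q q)]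
    · ext I
      simp [and_assoc, and_comm]
    · rintro J ⟨hJ, hJs⟩ hx
      rw [← hremove q J hJ hx]
      exact ⟨And.left, fun hmem => ⟨hmem, fun p hp => (hB q p J hx).not.2 (hJs p hp)⟩⟩
    · rintro I ⟨hI, hIs⟩ hx hBI
      obtain ⟨J, hJ, hxJ, rfl⟩ := hadd q I hI hx hBI
      exact ⟨J, ⟨hJ, fun p hp => (hB q p J hxJ).not.1 (hIs p hp)⟩, hxJ, rfl⟩

end SimultaneousMatching

/-! ### The octagon-square torus -/

open Fin.CommRing in
lemma forall_of_forall_imp_add_one {n : ℕ} [NeZero n] {P : Fin n → Prop}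
    (hstep : ∀ i, P i → P (i + 1)) {i₀ : Fin n} (h₀ : P i₀) (i : Fin n) : P i := by
  have hadd (k : ℕ) : P (i₀ + (k : Fin n)) := by
    induction k with
    | zero => simpa using h₀
    | succ k ih => simpa [add_assoc] using hstep _ ih
  simpa using hadd (i - i₀).val

section Torus

variable {M L : ℕ} [NeZero M] [NeZero L] {i : Fin M} {j : Fin L} {v : Fin M × Fin L × Fin 4}

lemma octTorus_adj_zero_iff :
    (octTorus M L).Adj (i, j, 0) v ↔ v = (i, j, 1) ∨ v = (i, j, 3) ∨ v = (i, j - 1, 2) := by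
  obtain ⟨i', j', k⟩ := v
  fin_cases k <;> simp [octTorus, octTorusE, eq_comm, eq_sub_iff_add_eq]

lemma octTorus_adj_one_iff :
    (octTorus M L).Adj (i, j, 1) v ↔ v = (i, j, 0) ∨ v = (i, j, 2) ∨ v = (i + 1, j, 3) := by
  obtain ⟨i', j', k⟩ := v
  fin_cases k <;> simp [octTorus, octTorusE, eq_comm]

lemma octTorus_adj_three_iff :
    (octTorus M L).Adj (i, j, 3) v ↔ v = (i, j, 0) ∨ v = (i, j, 2) ∨ v = (i - 1, j, 1) := by
  obtain ⟨i', j', k⟩ := v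
  fin_cases k <;> simp [octTorus, octTorusE, eq_comm, eq_sub_iff_add_eq]

/-- Site `0` or site `2` of the plaquette `(i, j)` is occupied; these are the sites with a vertical
link. -/
def IsVertical (I : IndepSet (octTorus M L)) (i : Fin M) (j : Fin L) : Prop :=
  (i, j, 0) ∈ I.1 ∨ (i, j, 2) ∈ I.1

/-- The configurations left after matching at the sites `1`. -/
def linkSaturated (M L : ℕ) [NeZero M] [NeZero L] : Set (IndepSet (octTorus M L)) :=
  {I | ∀ i j, IsVertical I i j ∨ (i + 1, j, 3) ∈ I.1}

/-- The configurations left after matching at the sites `1`, then at the sites `3`. -/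
def rowAligned (M L : ℕ) [NeZero M] [NeZero L] : Set (IndepSet (octTorus M L)) :=
  {I ∈ linkSaturated M L | ∀ i j, IsVertical I i j → IsVertical I (i + 1) j}

/-- The configurations left after matching at the sites `1`, then at the sites `3`, then at the
sites `0`. -/
def critical (M L : ℕ) [NeZero M] [NeZero L] : Set (IndepSet (octTorus M L)) :=
  {I ∈ rowAligned M L | ∀ i j, (i, j, 2) ∈ I.1 → (i, j - 1, 2) ∈ I.1}

variable {I : IndepSet (octTorus M L)}

lemma not_isVertical_of_one_mem (h : (i, j, 1) ∈ I.1) : ¬ IsVertical I i j := by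
  rintro (h' | h') <;> exact I.2 h h' (octTorus_adj_one_iff.2 (by simp))

lemma not_isVertical_of_three_mem (h : (i, j, 3) ∈ I.1) : ¬ IsVertical I i j := by
  rintro (h' | h') <;> exact I.2 h h' (octTorus_adj_three_iff.2 (by simp))

lemma three_mem_of_not_isVertical (hI : I ∈ rowAligned M L) (h : ¬ IsVertical I i j) :
    (i, j, 3) ∈ I.1 := by
  have hstep := hI.2 (i - 1) j
  have hlink := hI.1 (i - 1) j
  rw [sub_add_cancel] at hstep hlink
  exact hlink.resolve_left (mt hstep h)

section Matching

variable [LinearOrder (Fin M × Fin L × Fin 4)]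

theorem eliminatesTo_linkSaturated : EliminatesTo Set.univ (linkSaturated M L) := by
  let x : Fin M × Fin L → Fin M × Fin L × Fin 4 := fun p => (p.1, p.2, 1)
  let B : Fin M × Fin L → IndepSet (octTorus M L) → Prop := fun p I =>
    ¬ IsVertical I p.1 p.2 ∧ (p.1 + 1, p.2, 3) ∉ I.1
  convert eliminatesTo_setOf_forall_not (x := x) (B := B) ?_ ?_ ?_ using 1
  · ext I
    simp [linkSaturated, B, or_iff_not_imp_left]
  · simp [B, x, IsVertical]
  · intro p J _ hJ
    have hlink : (p.1 + 1, p.2, 3) ∉ J.1 := fun h => J.2 hJ h (octTorus_adj_one_iff.2 (by simp))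
    simpa [B] using ⟨not_isVertical_of_one_mem hJ, hlink⟩
  · rintro p I - hx ⟨hv, hlink⟩
    simpa using IndepSet.exists_erase_eq hx fun v hvI hadj => by
      rcases octTorus_adj_one_iff.1 hadj with rfl | rfl | rfl
      · exact hv (Or.inl hvI)
      · exact hv (Or.inr hvI)
      · exact hlink hvI

theorem linkSaturated_eliminatesTo_rowAligned :
    EliminatesTo (linkSaturated M L) (rowAligned M L) := by
  let x : Fin M × Fin L → Fin M × Fin L × Fin 4 := fun p => (p.1 + 1, p.2, 3)
  let B : Fin M × Fin L → IndepSet (octTorus M L) → Prop := fun p I =>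
    IsVertical I p.1 p.2 ∧ ¬ IsVertical I (p.1 + 1) p.2
  have isVertical_erase (p J i j) : IsVertical (J.erase (x p)) i j ↔ IsVertical J i j := by
    simp [IsVertical, x]
  convert eliminatesTo_setOf_forall_not (x := x) (B := B) ?_ ?_ ?_ using 1
  · ext I
    simp [rowAligned, B]
  · simp [B, isVertical_erase]
  · intro p J hJ hxJ
    constructor
    · intro herase
      have hv := (herase p.1 p.2).resolve_right (by simp [x])
      exact ⟨(isVertical_erase p J _ _).1 hv, not_isVertical_of_three_mem hxJ⟩
    · rintro ⟨hv, -⟩ i j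
      rw [isVertical_erase]
      by_cases hp : p = (i, j)
      · subst hp
        exact Or.inl hv
      · refine (hJ i j).imp_right fun h3 => IndepSet.mem_erase.2 ⟨fun heq => hp ?_, h3⟩
        simpa [x, Prod.ext_iff, eq_comm] using heq
  · rintro p I hI hx ⟨hv, hv'⟩
    obtain ⟨J, hxJ, rfl⟩ := IndepSet.exists_erase_eq hx fun v hvI hadj => by
      rcases octTorus_adj_three_iff.1 hadj with rfl | rfl | rfl
      · exact hv' (Or.inl hvI)
      · exact hv' (Or.inr hvI)
      · exact not_isVertical_of_one_mem hvI (by simpa using hv)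
    refine ⟨J, fun i j => ?_, hxJ, rfl⟩
    exact (hI i j).imp (isVertical_erase p J i j).1 fun h => (IndepSet.mem_erase.1 h).2

lemma isVertical_erase_zero_iff (h2 : (i, j, 2) ∈ I.1) {i' : Fin M} {j' : Fin L} :
    IsVertical (I.erase (i, j, 0)) i' j' ↔ IsVertical I i' j' := by
  by_cases hp : (i', j') = (i, j)
  · obtain ⟨rfl, rfl⟩ := Prod.mk.inj hp
    simp [IsVertical, h2]
  · have hne : (i', j', (0 : Fin 4)) ≠ (i, j, 0) := by simpa using hp
    simp [IsVertical, hne]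

lemma erase_zero_mem_rowAligned_iff (h2 : (i, j, 2) ∈ I.1) :
    I.erase (i, j, 0) ∈ rowAligned M L ↔ I ∈ rowAligned M L := by
  simp [rowAligned, linkSaturated, isVertical_erase_zero_iff h2]

lemma two_mem_of_erase_zero_mem_rowAligned (h0 : (i, j, 0) ∈ I.1)
    (herase : I.erase (i, j, 0) ∈ rowAligned M L) : (i, j, 2) ∈ I.1 := by
  by_contra h2
  have h3 : (i, j, 3) ∈ (I.erase (i, j, 0)).1 :=
    three_mem_of_not_isVertical herase (by simp [IsVertical, h2])
  exact not_isVertical_of_three_mem (IndepSet.mem_erase.1 h3).2 (Or.inl h0)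

theorem rowAligned_eliminatesTo_critical : EliminatesTo (rowAligned M L) (critical M L) := by
  let x : Fin M × Fin L → Fin M × Fin L × Fin 4 := fun p => (p.1, p.2, 0)
  let B : Fin M × Fin L → IndepSet (octTorus M L) → Prop := fun p I =>
    (p.1, p.2, 2) ∈ I.1 ∧ (p.1, p.2 - 1, 2) ∉ I.1
  convert eliminatesTo_setOf_forall_not (x := x) (B := B) ?_ ?_ ?_ using 1
  · ext I
    simp [critical, B]
  · simp [B, x]
  · intro p J hJ hxJ
    have hlink : (p.1, p.2 - 1, 2) ∉ J.1 := fun h =>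
      J.2 hxJ h (octTorus_adj_zero_iff.2 (by simp))
    exact ⟨fun herase => ⟨two_mem_of_erase_zero_mem_rowAligned hxJ herase, hlink⟩,
      fun h => (erase_zero_mem_rowAligned_iff h.1).2 hJ⟩
  · rintro p I hI hx ⟨h2, hlink⟩
    obtain ⟨J, hxJ, rfl⟩ := IndepSet.exists_erase_eq hx fun v hvI hadj => by
      rcases octTorus_adj_zero_iff.1 hadj with rfl | rfl | rfl
      · exact not_isVertical_of_one_mem hvI (Or.inr h2)
      · exact not_isVertical_of_three_mem hvI (Or.inr h2)
      · exact hlink hvI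
    exact ⟨J, (erase_zero_mem_rowAligned_iff (IndepSet.mem_erase.1 h2).2).1 hI, hxJ, rfl⟩

theorem eliminatesTo_critical : EliminatesTo Set.univ (critical M L) :=
  eliminatesTo_linkSaturated.trans
    (linkSaturated_eliminatesTo_rowAligned.trans rowAligned_eliminatesTo_critical)

end Matching

section CriticalConfigurations

lemma isVertical_of_isVertical (hI : I ∈ rowAligned M L) (h : IsVertical I i j) (i' : Fin M) :
    IsVertical I i' j :=
  forall_of_forall_imp_add_one (P := fun i => IsVertical I i j) (fun i => hI.2 i j) h i'

lemma one_notMem_of_mem_rowAligned (hI : I ∈ rowAligned M L) : (i, j, 1) ∉ I.1 := fun h1 => by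
  have hv : ¬ IsVertical I (i + 1) j := fun hv =>
    not_isVertical_of_one_mem h1 (isVertical_of_isVertical hI hv i)
  exact I.2 h1 (three_mem_of_not_isVertical hI hv) (octTorus_adj_one_iff.2 (by simp))

lemma two_mem_of_two_mem (hI : I ∈ critical M L) (h : (i, j, 2) ∈ I.1) (j' : Fin L) :
    (i, j', 2) ∈ I.1 := by
  by_contra h'
  refine forall_of_forall_imp_add_one (P := fun j => (i, j, 2) ∉ I.1) (fun j hj hj' => hj ?_) h' j h
  simpa using hI.2 i (j + 1) hj'

lemma zero_notMem_of_two_mem (hI : I ∈ critical M L) (h : (i, j, 2) ∈ I.1) : (i, j, 0) ∉ I.1 :=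
  fun h0 => I.2 h0 (hI.2 i j h) (octTorus_adj_zero_iff.2 (by simp))

end CriticalConfigurations

end Torus

section PlaquetteConfigurations

variable {M L : ℕ}

/-- The configuration with a single particle on each plaquette `p`, at its site `k p`. -/
def config (k : Fin M × Fin L → Fin 4) : Finset (Fin M × Fin L × Fin 4) :=
  Finset.univ.map ⟨fun p => (p.1, p.2, k p), fun p q h => by
    simp only [Prod.mk.injEq] at h
    exact Prod.ext h.1 h.2.1⟩

/-- All particles at the sites `0` in the rows `j ∈ S` and at the sites `3` in the other rows. -/
def rowType (S : Finset (Fin L)) (p : Fin M × Fin L) : Fin 4 := if p.2 ∈ S then 0 else 3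

/-- All particles at the sites `2` in the columns `i ∈ T` and at the sites `0` in the other
columns. -/
def columnType (T : Finset (Fin M)) (p : Fin M × Fin L) : Fin 4 := if p.1 ∈ T then 2 else 0

@[simp]
lemma mem_config {k : Fin M × Fin L → Fin 4} {i : Fin M} {j : Fin L} {c : Fin 4} :
    (i, j, c) ∈ config k ↔ k (i, j) = c := by
  constructor
  · simp only [config, Finset.mem_map, Finset.mem_univ, true_and]
    rintro ⟨p, hp⟩
    obtain ⟨rfl, rfl, rfl⟩ : p.1 = i ∧ p.2 = j ∧ k p = c := by
      simpa using show (p.1, p.2, k p) = (i, j, c) from hp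
    rfl
  · rintro rfl
    exact Finset.mem_map.2 ⟨(i, j), Finset.mem_univ _, rfl⟩

lemma card_config (k : Fin M × Fin L → Fin 4) : (config k).card = M * L := by
  simp [config]

lemma config_injective :
    Function.Injective (config : (Fin M × Fin L → Fin 4) → Finset (Fin M × Fin L × Fin 4)) :=
  fun k k' h => funext fun p =>
    (mem_config.1 (h ▸ mem_config.2 rfl : (p.1, p.2, k p) ∈ config k')).symm

lemma rowType_injective [NeZero M] :
    Function.Injective (rowType : Finset (Fin L) → Fin M × Fin L → Fin 4) := by
  intro S S' h
  ext j
  have := congrFun h (0, j)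
  by_cases hS : j ∈ S <;> by_cases hS' : j ∈ S' <;> simp_all [rowType]

lemma columnType_injective [NeZero L] :
    Function.Injective (columnType : Finset (Fin M) → Fin M × Fin L → Fin 4) := by
  intro T T' h
  ext i
  have := congrFun h (i, 0)
  by_cases hT : i ∈ T <;> by_cases hT' : i ∈ T' <;> simp_all [columnType]

lemma range_rowType_inter_range_columnType :
    Set.range (rowType : Finset (Fin L) → Fin M × Fin L → Fin 4) ∩ Set.range columnType =
      {fun _ => 0} := by
  ext k
  constructor
  · rintro ⟨⟨S, rfl⟩, T, hT⟩
    funext p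
    have := congrFun hT p
    by_cases hS : p.2 ∈ S <;> by_cases hT : p.1 ∈ T <;> simp_all [rowType, columnType]
  · rintro rfl
    exact ⟨⟨Finset.univ, by funext; simp [rowType]⟩, ∅, by funext; simp [columnType]⟩

lemma ncard_range_rowType_union_range_columnType [NeZero M] [NeZero L] :
    (Set.range (rowType : Finset (Fin L) → Fin M × Fin L → Fin 4) ∪
      Set.range columnType).ncard = 2 ^ M + 2 ^ L - 1 := by
  have inclusion_exclusion := Set.ncard_union_add_ncard_inter
    (Set.range (rowType : Finset (Fin L) → Fin M × Fin L → Fin 4)) (Set.range columnType)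
  rw [range_rowType_inter_range_columnType, Set.ncard_singleton,
    Set.ncard_range_of_injective rowType_injective,
    Set.ncard_range_of_injective columnType_injective] at inclusion_exclusion
  simp only [Nat.card_eq_fintype_card, Fintype.card_finset, Fintype.card_fin]
    at inclusion_exclusion
  omega

end PlaquetteConfigurations

section Classification

variable {M L : ℕ} [NeZero M] [NeZero L] {i : Fin M} {j : Fin L} {I : IndepSet (octTorus M L)}

lemma indep_config {k : Fin M × Fin L → Fin 4} (h13 : ∀ i j, k (i, j) = 1 → k (i + 1, j) ≠ 3)
    (h20 : ∀ i j, k (i, j) = 2 → k (i, j + 1) ≠ 0) : Indep (octTorus M L) (config k) := by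
  have no_edge : ∀ a ∈ config k, ∀ b ∈ config k, ¬ octTorusE M L a b := by
    rintro ⟨i, j, c⟩ ha ⟨i', j', c'⟩ hb hE
    rw [mem_config] at ha hb
    simp only [octTorusE] at hE
    rcases hE with ⟨rfl, rfl, h⟩ | ⟨rfl, rfl, rfl, rfl⟩ | ⟨rfl, rfl, rfl, rfl⟩
    · obtain rfl : c = c' := ha.symm.trans hb
      omega
    · exact h13 _ _ ha hb
    · exact h20 _ _ ha hb
  rintro a ha b hb ⟨-, hab | hba⟩
  · exact no_edge a ha b hb hab
  · exact no_edge b hb a ha hba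

lemma exists_mem_critical_coe_eq_config_rowType (S : Finset (Fin L)) :
    ∃ I ∈ critical M L, I.1 = config (rowType S) := by
  refine ⟨⟨config (rowType S), indep_config (fun i j => ?_) fun i j => ?_⟩, ?_, rfl⟩
  · by_cases hj : j ∈ S <;> simp [rowType, hj]
  · by_cases hj : j ∈ S <;> simp [rowType, hj]
  · refine ⟨⟨fun i j => ?_, fun i j => ?_⟩, fun i j => ?_⟩ <;>
      by_cases hj : j ∈ S <;> simp [IsVertical, rowType, hj]

lemma exists_mem_critical_coe_eq_config_columnType (T : Finset (Fin M)) :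
    ∃ I ∈ critical M L, I.1 = config (columnType T) := by
  refine ⟨⟨config (columnType T), indep_config (fun i j => ?_) fun i j => ?_⟩, ?_, rfl⟩
  · by_cases hi : i ∈ T <;> simp [columnType, hi]
  · by_cases hi : i ∈ T <;> simp [columnType, hi]
  · refine ⟨⟨fun i j => ?_, fun i j => ?_⟩, fun i j => ?_⟩ <;>
      by_cases hi : i ∈ T <;> by_cases hi' : i + 1 ∈ T <;> simp [IsVertical, columnType, hi, hi']

lemma exists_coe_eq_config_columnType (hI : I ∈ critical M L) (h2 : (i, j, 2) ∈ I.1) :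
    ∃ T, I.1 = config (columnType T) := by
  classical
  have vertical (i' j') : IsVertical I i' j' :=
    isVertical_of_isVertical hI.1 (Or.inr (two_mem_of_two_mem hI h2 j')) i'
  refine ⟨Finset.univ.filter fun i => (i, 0, 2) ∈ I.1, Finset.ext fun ⟨i, j, c⟩ => ?_⟩
  have h1 : (i, j, 1) ∉ I.1 := one_notMem_of_mem_rowAligned hI.1
  have h3 : (i, j, 3) ∉ I.1 := fun h => not_isVertical_of_three_mem h (vertical i j)
  by_cases hT : (i, 0, 2) ∈ I.1
  · have h2 : (i, j, 2) ∈ I.1 := two_mem_of_two_mem hI hT j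
    have h0 : (i, j, 0) ∉ I.1 := zero_notMem_of_two_mem hI h2
    fin_cases c <;> simp [columnType, hT, h0, h1, h2, h3]
  · have h2 : (i, j, 2) ∉ I.1 := fun h => hT (two_mem_of_two_mem hI h 0)
    have h0 : (i, j, 0) ∈ I.1 := (vertical i j).resolve_right h2
    fin_cases c <;> simp [columnType, hT, h0, h1, h2, h3]

lemma exists_coe_eq_config_rowType (hI : I ∈ rowAligned M L) (h2 : ∀ i j, (i, j, 2) ∉ I.1) :
    ∃ S, I.1 = config (rowType S) := by
  classical
  refine ⟨Finset.univ.filter fun j => IsVertical I 0 j, Finset.ext fun ⟨i, j, c⟩ => ?_⟩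
  have h1 : (i, j, 1) ∉ I.1 := one_notMem_of_mem_rowAligned hI
  by_cases hS : IsVertical I 0 j
  · have hv : IsVertical I i j := isVertical_of_isVertical hI hS i
    have h0 : (i, j, 0) ∈ I.1 := hv.resolve_right (h2 i j)
    have h3 : (i, j, 3) ∉ I.1 := fun h => not_isVertical_of_three_mem h hv
    fin_cases c <;> simp [rowType, hS, h0, h1, h2, h3]
  · have hv : ¬ IsVertical I i j := fun h => hS (isVertical_of_isVertical hI h 0)
    have h0 : (i, j, 0) ∉ I.1 := fun h => hv (Or.inl h)
    have h3 : (i, j, 3) ∈ I.1 := three_mem_of_not_isVertical hI hv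
    fin_cases c <;> simp [rowType, hS, h0, h1, h2, h3]

lemma image_coe_critical : (fun I => I.1) '' critical M L =
    config '' (Set.range rowType ∪ Set.range columnType) := by
  ext K
  constructor
  · rintro ⟨I, hI, rfl⟩
    by_cases h2 : ∃ i j, (i, j, 2) ∈ I.1
    · obtain ⟨i, j, h2⟩ := h2
      obtain ⟨T, hT⟩ := exists_coe_eq_config_columnType hI h2
      exact ⟨columnType T, Or.inr ⟨T, rfl⟩, hT.symm⟩
    · obtain ⟨S, hS⟩ := exists_coe_eq_config_rowType hI.1 (by simpa using h2)
      exact ⟨rowType S, Or.inl ⟨S, rfl⟩, hS.symm⟩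
  · rintro ⟨_, ⟨S, rfl⟩ | ⟨T, rfl⟩, rfl⟩
    · exact exists_mem_critical_coe_eq_config_rowType S
    · exact exists_mem_critical_coe_eq_config_columnType T

theorem ncard_critical : (critical M L).ncard = 2 ^ M + 2 ^ L - 1 := by
  rw [← Set.ncard_image_of_injective _ IndepSet.coe_injective, image_coe_critical,
    Set.ncard_image_of_injective _ config_injective, ncard_range_rowType_union_range_columnType]

lemma card_of_mem_critical (hI : I ∈ critical M L) : I.1.card = M * L := by
  obtain ⟨k, -, hk⟩ := image_coe_critical.subset (Set.mem_image_of_mem _ hI)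
  rw [← hk, card_config]

end Classification

/-- For `M, L ≥ 2`, the hard-core fermion model on the torus
octagon-square lattice `O_{M,L}` has exactly `2^M + 2^L − 1` zero-energy ground states,
and every ground state is an eigenvector of the number operator with eigenvalue `M·L`
(filling `1/4` of the `4ML` sites). -/
theorem octagon_square_torus_ground_states (M L : ℕ) [NeZero M] [NeZero L]
    (hM : 2 ≤ M) (hL : 2 ≤ L)
    [LinearOrder (Fin M × Fin L × Fin 4)] :
    Module.finrank ℂ ↥(LinearMap.ker (hamiltonian (octTorus M L))) = 2 ^ M + 2 ^ L - 1 ∧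
    ∀ ψ ∈ LinearMap.ker (hamiltonian (octTorus M L)),
      numberOp (octTorus M L) ψ = ((M * L : ℕ) : ℂ) • ψ := by
  have matching : EliminatesTo Set.univ (critical M L) := eliminatesTo_critical
  have degree : ∀ I ∈ critical M L, I.1.card = M * L := fun _ => card_of_mem_critical
  refine ⟨?_, fun ψ hψ => matching.numberOp_of_mem_ker_hamiltonian degree hψ⟩
  rw [matching.finrank_ker_hamiltonian degree, ncard_critical]
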